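/- Let ρ : ℝ³ → ℝ be smooth with |ρ(x)| ≤ C e^{−a|x|} for some constants C, a > 0, and let φ : ℝ³ → ℝ be smooth with Δφ = −ρ. Suppose there exist harmonic homogeneous complex-valued polynomials p_m of degree m (m = 0, 1, 2, …) such that for every K ∈ ℕ, as |x| → ∞, φ(x) = Σ_{m=0}^{K} p_m(x/|x|)/|x|^{m+1} + O(|x|^{−K−2}) and ∂φ/∂r(x) = Σ_{m=0}^{K} −(m+1) p_m(x/|x|)/|x|^{m+2} + O(|x|^{−K−2}), where ∂/∂r is the radial derivative. Then for every ℓ ∈ ℕ and every ζ ∈ ℂ, ∫_{ℝ³} ρ(x) x(ζ)^ℓ d³x = (2ℓ+1) ∫_{S²} p_ℓ(n) n(ζ)^ℓ dA(n). -/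

import Mathlib

open MeasureTheory Asymptotics Filter

/-- `x(ζ) = (1/2)(x₁ + i x₂) + ζ x₃ − (1/2)(x₁ − i x₂) ζ²` on Euclidean `ℝ³`. -/
noncomputable def xzE (ζ : ℂ) (x : EuclideanSpace ℝ (Fin 3)) : ℂ :=
  (1 / 2 : ℂ) * ((x 0 : ℂ) + Complex.I * (x 1 : ℂ)) + ζ * (x 2 : ℂ)
    - (1 / 2 : ℂ) * ((x 0 : ℂ) - Complex.I * (x 1 : ℂ)) * ζ ^ 2

/-- Partial derivative `∂f/∂x_j` of a complex-valued function on Euclidean `ℝ³`. -/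
noncomputable def pdE (j : Fin 3) (f : EuclideanSpace ℝ (Fin 3) → ℂ)
    (x : EuclideanSpace ℝ (Fin 3)) : ℂ :=
  fderiv ℝ f x (EuclideanSpace.single j 1)

/-- Partial derivative `∂f/∂x_j` of a real-valued function on Euclidean `ℝ³`. -/
noncomputable def pdER (j : Fin 3) (f : EuclideanSpace ℝ (Fin 3) → ℝ)
    (x : EuclideanSpace ℝ (Fin 3)) : ℝ :=
  fderiv ℝ f x (EuclideanSpace.single j 1)

/-- Evaluation of a complex polynomial in three variables at a real point of `ℝ³`. -/
noncomputable def evalP (P : MvPolynomial (Fin 3) ℂ) (x : EuclideanSpace ℝ (Fin 3)) : ℂ :=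
  MvPolynomial.eval (fun i => (x i : ℂ)) P

/-!
The function `q(x) = x(ζ) ^ ℓ` is harmonic and homogeneous of degree `ℓ`. For a smooth cutoff `G`
which is `1` on `(-1, 1)`, Green's identity for `φ` and the compactly supported function
`G(|x|² / R²) q(x)` expresses the truncated moment `∫ G(|x|² / R²) ρ q` as the integral of `φ`
against `-Δ(G(|x|² / R²) q)`. The latter is a radial function times `q` and vanishes for `|x| < R`,
so the multipole expansion of `φ` may be inserted. Rescaling by `R`, the `m`-th multipole
contributes a constant times `R ^ (ℓ - m)` and the remainder tends to `0`. The sum of the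
contributions is a polynomial in `R` which converges to the moment as `R → ∞`, so only its constant
term, the one with `m = ℓ`, survives. In it the radial integral is that of an exact derivative, and
equals `2ℓ + 1` in dimension three.
-/

section MultipoleMoments

open Module InnerProductSpace Metric Set
open scoped Topology Laplacian ContDiff RealInnerProductSpace

section Laplacian

variable {E F : Type*} [NormedAddCommGroup E] [InnerProductSpace ℝ E]
  [NormedAddCommGroup F] [NormedSpace ℝ F]

theorem contDiff_fderiv_apply_const {f : E → F} (hf : ContDiff ℝ 2 f) (v : E) :
    ContDiff ℝ 1 fun x ↦ fderiv ℝ f x v :=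
  (hf.fderiv_right le_rfl).clm_apply contDiff_const

theorem hasFDerivAt_comp_norm_sq {G : ℝ → ℝ} (hG : Differentiable ℝ G) (x : E) :
    HasFDerivAt (fun y : E ↦ G (‖y‖ ^ 2)) ((2 * deriv G (‖x‖ ^ 2)) • innerSL ℝ x) x := by
  have := (hG (‖x‖ ^ 2)).hasDerivAt.comp_hasFDerivAt x (hasStrictFDerivAt_norm_sq x).hasFDerivAt
  convert! this using 1
  module

theorem contDiff_comp_norm_sq {n : WithTop ℕ∞} {G : ℝ → ℝ} (hG : ContDiff ℝ n G) :
    ContDiff ℝ n fun x : E ↦ G (‖x‖ ^ 2) :=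
  hG.comp (contDiff_norm_sq ℝ)

theorem fderiv_apply_self_of_homogeneous {q : E → F} {n : ℕ}
    (hq : ∀ r : ℝ, 0 < r → ∀ x, q (r • x) = r ^ n • q x) {x : E} (hx : DifferentiableAt ℝ q x) :
    fderiv ℝ q x x = (n : ℝ) • q x := by
  have hcomp : HasDerivAt (fun r : ℝ ↦ q (r • x)) (fderiv ℝ q x x) 1 := by
    have hline : HasDerivAt (fun r : ℝ ↦ r • x) x 1 := by
      simpa using (hasDerivAt_id (1 : ℝ)).smul_const x
    rw [← one_smul ℝ x] at hx
    simpa [Function.comp_def] using hx.hasFDerivAt.comp_hasDerivAt 1 hline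
  have hpow : HasDerivAt (fun r : ℝ ↦ r ^ n • q x) ((n : ℝ) • q x) 1 := by
    simpa using (hasDerivAt_pow n (1 : ℝ)).smul_const (q x)
  refine hcomp.unique (hpow.congr_of_eventuallyEq ?_)
  filter_upwards [lt_mem_nhds one_pos] with r hr using hq r hr x

variable [FiniteDimensional ℝ E]

theorem laplacian_eq_sum_fderiv_fderiv {ι : Type*} [Fintype ι] (b : OrthonormalBasis ι ℝ E)
    {f : E → F} {x : E} (hf : ContDiffAt ℝ 2 f x) :
    Δ f x = ∑ i, fderiv ℝ (fun y ↦ fderiv ℝ f y (b i)) x (b i) := by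
  have hf' : DifferentiableAt ℝ (fderiv ℝ f) x :=
    (hf.fderiv_right (m := 1) le_rfl).differentiableAt one_ne_zero
  simp [laplacian_eq_iteratedFDeriv_orthonormalBasis f b, iteratedFDeriv_two_apply,
    fderiv_clm_apply hf' (differentiableAt_const _)]

theorem laplacian_comp_const_smul {f : E → F} (hf : ContDiff ℝ 2 f) (c : ℝ) (x : E) :
    Δ (fun y ↦ f (c • y)) x = c ^ 2 • Δ f (c • x) := by
  simp [laplacian_eq_iteratedFDeriv_stdOrthonormalBasis, iteratedFDeriv_comp_const_smul c hf,
    Finset.smul_sum]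

theorem laplacian_fun_smul {ι : Type*} [Fintype ι] (b : OrthonormalBasis ι ℝ E)
    {f : E → ℝ} {g : E → F} (hf : ContDiff ℝ 2 f) (hg : ContDiff ℝ 2 g) (x : E) :
    Δ (fun y ↦ f y • g y) x =
      Δ f x • g x + (2 : ℝ) • ∑ i, fderiv ℝ f x (b i) • fderiv ℝ g x (b i) + f x • Δ g x := by
  have hdf := hf.differentiable two_ne_zero
  have hdg := hg.differentiable two_ne_zero
  have hdf' (v : E) : Differentiable ℝ fun y ↦ fderiv ℝ f y v :=
    (contDiff_fderiv_apply_const hf v).differentiable one_ne_zero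
  have hdg' (v : E) : Differentiable ℝ fun y ↦ fderiv ℝ g y v :=
    (contDiff_fderiv_apply_const hg v).differentiable one_ne_zero
  have first (v y : E) : fderiv ℝ (fun y ↦ f y • g y) y v =
      f y • fderiv ℝ g y v + fderiv ℝ f y v • g y := by
    simp [fderiv_fun_smul (hdf y) (hdg y)]
  have second (v : E) : fderiv ℝ (fun y ↦ fderiv ℝ (fun y ↦ f y • g y) y v) x v =
      fderiv ℝ (fun y ↦ fderiv ℝ f y v) x v • g x + (2 : ℝ) • fderiv ℝ f x v • fderiv ℝ g x v
        + f x • fderiv ℝ (fun y ↦ fderiv ℝ g y v) x v := by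
    simp only [first]
    rw [fderiv_fun_add ((hdf x).fun_smul (hdg' v x)) ((hdf' v x).fun_smul (hdg x)),
      fderiv_fun_smul (hdf x) (hdg' v x), fderiv_fun_smul (hdf' v x) (hdg x)]
    simp only [add_apply, FunLike.coe_smul, Pi.smul_apply, ContinuousLinearMap.smulRight_apply]
    module
  rw [laplacian_eq_sum_fderiv_fderiv b (hf.fun_smul hg).contDiffAt,
    laplacian_eq_sum_fderiv_fderiv b hf.contDiffAt, laplacian_eq_sum_fderiv_fderiv b hg.contDiffAt]
  simp only [second, Finset.sum_add_distrib, Finset.sum_smul, Finset.smul_sum]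

/-- The value at radius `r` of the Laplacian in dimension `n` of the function `G (‖x‖ ^ 2)`. If `n`
is shifted by `2 * m`, it is the radial factor of the Laplacian of `G (‖x‖ ^ 2) • q x` for `q`
harmonic and homogeneous of degree `m`. -/
noncomputable def radialLaplacian (n : ℕ) (G : ℝ → ℝ) (r : ℝ) : ℝ :=
  2 * n * deriv G (r ^ 2) + 4 * r ^ 2 * deriv (deriv G) (r ^ 2)

theorem laplacian_comp_norm_sq {G : ℝ → ℝ} (hG : ContDiff ℝ 2 G) (x : E) :
    Δ (fun y : E ↦ G (‖y‖ ^ 2)) x = radialLaplacian (finrank ℝ E) G ‖x‖ := by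
  have hG' : Differentiable ℝ (deriv G) :=
    ((contDiff_succ_iff_deriv (n := 1)).1 hG).2.2.differentiable one_ne_zero
  have second (v : E) : fderiv ℝ (fun y : E ↦ fderiv ℝ (fun y : E ↦ G (‖y‖ ^ 2)) y v) x v =
      2 * deriv G (‖x‖ ^ 2) * ‖v‖ ^ 2 + 4 * deriv (deriv G) (‖x‖ ^ 2) * ⟪x, v⟫ ^ 2 := by
    have hinner : HasFDerivAt (fun y : E ↦ ⟪y, v⟫) (innerSL ℝ v) x := by
      simp only [real_inner_comm v]
      exact (innerSL ℝ v).hasFDerivAt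
    have := ((hasFDerivAt_comp_norm_sq hG' x).const_mul 2).fun_mul hinner
    simp only [(hasFDerivAt_comp_norm_sq (hG.differentiable two_ne_zero) _).fderiv,
      FunLike.coe_smul, Pi.smul_apply, innerSL_apply_apply, smul_eq_mul, this.fderiv, add_apply,
      real_inner_self_eq_norm_sq]
    ring
  let b := stdOrthonormalBasis ℝ E
  rw [laplacian_eq_sum_fderiv_fderiv b (contDiff_comp_norm_sq hG).contDiffAt]
  simp only [second, Finset.sum_add_distrib, ← Finset.mul_sum, b.sum_sq_inner_left, b.norm_eq_one]
  simp only [one_pow, Finset.sum_const, Finset.card_univ, Fintype.card_fin, nsmul_eq_mul, mul_one,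
    radialLaplacian]
  ring

theorem laplacian_comp_norm_sq_smul {G : ℝ → ℝ} (hG : ContDiff ℝ 2 G) {q : E → F} {n : ℕ}
    (hq : ContDiff ℝ 2 q) (hharm : ∀ x, Δ q x = 0)
    (hhom : ∀ r : ℝ, 0 < r → ∀ x, q (r • x) = r ^ n • q x) (x : E) :
    Δ (fun y ↦ G (‖y‖ ^ 2) • q y) x = radialLaplacian (finrank ℝ E + 2 * n) G ‖x‖ • q x := by
  let b := stdOrthonormalBasis ℝ E
  have cross : ∑ i, ⟪x, b i⟫ • fderiv ℝ q x (b i) = (n : ℝ) • q x := by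
    simp only [real_inner_comm (b _) x, ← map_smul, ← map_sum, b.sum_repr',
      fderiv_apply_self_of_homogeneous hhom (hq.differentiable two_ne_zero x)]
  rw [laplacian_fun_smul b (contDiff_comp_norm_sq hG) hq, hharm, laplacian_comp_norm_sq hG,
    (hasFDerivAt_comp_norm_sq (hG.differentiable two_ne_zero) x).fderiv]
  simp only [FunLike.coe_smul, Pi.smul_apply, innerSL_apply_apply, smul_assoc, ← Finset.smul_sum,
    cross, radialLaplacian]
  push_cast
  module

theorem laplacian_clm_pow {ι : Type*} [Fintype ι] (b : OrthonormalBasis ι ℝ E) {A : Type*}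
    [NormedCommRing A] [NormedAlgebra ℝ A] {L : E →L[ℝ] A} (hL : ∑ i, L (b i) ^ 2 = 0) (n : ℕ)
    (x : E) : Δ (fun y ↦ L y ^ n) x = 0 := by
  have hderiv (m : ℕ) (y v : E) : fderiv ℝ (fun y ↦ L y ^ m) y v = m * L y ^ (m - 1) * L v := by
    simp [fderiv_fun_pow m L.differentiableAt, mul_assoc]
  have second (v : E) : fderiv ℝ (fun y ↦ n * L y ^ (n - 1) * L v) x v =
      n * ((n - 1 : ℕ) * L x ^ (n - 1 - 1)) * L v ^ 2 := by
    have hd : DifferentiableAt ℝ (fun y ↦ L y ^ (n - 1)) x := L.differentiableAt.pow _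
    rw [fderiv_mul_const (hd.const_mul _), fderiv_const_mul hd]
    simp only [FunLike.coe_smul, Pi.smul_apply, hderiv, smul_eq_mul]
    ring
  rw [laplacian_eq_sum_fderiv_fderiv b (L.contDiff.pow n).contDiffAt]
  simp only [hderiv, second, ← Finset.mul_sum, hL, mul_zero]

end Laplacian

section Green

theorem integrable_mul_of_hasCompactSupport {X A : Type*} [TopologicalSpace X] [MeasurableSpace X]
    [OpensMeasurableSpace X] [NormedRing A] {μ : Measure X} [IsFiniteMeasureOnCompacts μ]
    {f g : X → A} (hf : Continuous f) (hg : Continuous g) (hgc : HasCompactSupport g) :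
    Integrable (fun x ↦ f x * g x) μ :=
  (hf.mul hg).integrable_of_hasCompactSupport hgc.mul_left

variable {E : Type*} [NormedAddCommGroup E] [InnerProductSpace ℝ E]

theorem continuous_fderiv_fderiv_apply_const {F : Type*} [NormedAddCommGroup F] [NormedSpace ℝ F]
    {f : E → F} (hf : ContDiff ℝ 2 f) (v : E) :
    Continuous fun x ↦ fderiv ℝ (fun y ↦ fderiv ℝ f y v) x v :=
  ((contDiff_fderiv_apply_const hf v).continuous_fderiv one_ne_zero).clm_apply continuous_const

variable [FiniteDimensional ℝ E] [MeasurableSpace E] [BorelSpace E] {μ : Measure E}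
  [μ.IsAddHaarMeasure] {f g : E → ℂ}

theorem integral_mul_fderiv_fderiv_comm (hf : ContDiff ℝ 2 f) (hg : ContDiff ℝ 2 g)
    (hgc : HasCompactSupport g) (v : E) :
    ∫ x, f x * fderiv ℝ (fun y ↦ fderiv ℝ g y v) x v ∂μ =
      ∫ x, fderiv ℝ (fun y ↦ fderiv ℝ f y v) x v * g x ∂μ := by
  have hf' := contDiff_fderiv_apply_const hf v
  have hg' := contDiff_fderiv_apply_const hg v
  have hgc' : HasCompactSupport fun y ↦ fderiv ℝ g y v := hgc.fderiv_apply ℝ v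
  have hf'g' := integrable_mul_of_hasCompactSupport (μ := μ) hf'.continuous hg'.continuous hgc'
  calc ∫ x, f x * fderiv ℝ (fun y ↦ fderiv ℝ g y v) x v ∂μ
      = -∫ x, fderiv ℝ f x v * fderiv ℝ g x v ∂μ :=
        integral_mul_fderiv_eq_neg_fderiv_mul_of_integrable hf'g'
          (integrable_mul_of_hasCompactSupport hf.continuous
            (continuous_fderiv_fderiv_apply_const hg v) (hgc'.fderiv_apply ℝ v))
          (integrable_mul_of_hasCompactSupport hf.continuous hg'.continuous hgc')
          (fun x _ ↦ hf.differentiable two_ne_zero x) (fun x _ ↦ hg'.differentiable one_ne_zero x)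
    _ = ∫ x, fderiv ℝ (fun y ↦ fderiv ℝ f y v) x v * g x ∂μ := by
        rw [integral_mul_fderiv_eq_neg_fderiv_mul_of_integrable
          (integrable_mul_of_hasCompactSupport (continuous_fderiv_fderiv_apply_const hf v)
            hg.continuous hgc) hf'g'
          (integrable_mul_of_hasCompactSupport hf'.continuous hg.continuous hgc)
          (fun x _ ↦ hf'.differentiable one_ne_zero x) (fun x _ ↦ hg.differentiable two_ne_zero x),
          neg_neg]

theorem integral_mul_laplacian_comm (hf : ContDiff ℝ 2 f) (hg : ContDiff ℝ 2 g)
    (hgc : HasCompactSupport g) : ∫ x, f x * Δ g x ∂μ = ∫ x, Δ f x * g x ∂μ := by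
  let b := stdOrthonormalBasis ℝ E
  simp only [laplacian_eq_sum_fderiv_fderiv b hf.contDiffAt,
    laplacian_eq_sum_fderiv_fderiv b hg.contDiffAt, Finset.mul_sum, Finset.sum_mul]
  rw [integral_finsetSum, integral_finsetSum]
  · exact Finset.sum_congr rfl fun i _ ↦ integral_mul_fderiv_fderiv_comm hf hg hgc (b i)
  · exact fun i _ ↦ integrable_mul_of_hasCompactSupport
      (continuous_fderiv_fderiv_apply_const hf (b i)) hg.continuous hgc
  · exact fun i _ ↦ integrable_mul_of_hasCompactSupport hf.continuous
      (continuous_fderiv_fderiv_apply_const hg (b i))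
      ((hgc.fderiv_apply ℝ (b i)).fderiv_apply ℝ (b i))

end Green

section Radial

theorem hasCompactSupport_comp_of_tendsto {X F : Type*} [TopologicalSpace X] [R1Space X] [Zero F]
    {G : ℝ → F} (hG : HasCompactSupport G) {u : X → ℝ} (hu : Tendsto u (cocompact X) atTop) :
    HasCompactSupport fun x ↦ G (u x) := by
  rw [hasCompactSupport_iff_eventuallyEq, coclosedCompact_eq_cocompact] at hG ⊢
  exact hu.eventually (hG.filter_mono atTop_le_cocompact)

theorem hasCompactSupport_comp_norm_sq {E F : Type*} [NormedAddCommGroup E] [ProperSpace E] [Zero F]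
    {G : ℝ → F} (hG : HasCompactSupport G) : HasCompactSupport fun x : E ↦ G (‖x‖ ^ 2) :=
  hasCompactSupport_comp_of_tendsto hG
    ((tendsto_pow_atTop two_ne_zero).comp tendsto_norm_cocompact_atTop)

theorem hasCompactSupport_comp_sq {F : Type*} [Zero F] {G : ℝ → F} (hG : HasCompactSupport G) :
    HasCompactSupport fun r : ℝ ↦ G (r ^ 2) := by
  simpa only [Real.norm_eq_abs, sq_abs] using hasCompactSupport_comp_norm_sq (E := ℝ) hG

theorem continuous_radialLaplacian (n : ℕ) {G : ℝ → ℝ} (hG : ContDiff ℝ 2 G) :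
    Continuous (radialLaplacian n G) := by
  have hG' : ContDiff ℝ 1 (deriv G) := ((contDiff_succ_iff_deriv (n := 1)).1 hG).2.2
  have := hG'.continuous
  have := hG'.continuous_deriv le_rfl
  unfold radialLaplacian
  fun_prop

theorem hasCompactSupport_radialLaplacian (n : ℕ) {G : ℝ → ℝ} (hG : HasCompactSupport G) :
    HasCompactSupport (radialLaplacian n G) :=
  (hasCompactSupport_comp_sq hG.deriv).mul_left.add
    (hasCompactSupport_comp_sq hG.deriv.deriv).mul_left

theorem radialLaplacian_eq_zero (n : ℕ) {G : ℝ → ℝ} {r c : ℝ} (hG : G =ᶠ[𝓝 (r ^ 2)] fun _ ↦ c) :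
    radialLaplacian n G r = 0 := by
  have h := hG.deriv
  simp [radialLaplacian, h.eq_of_nhds, h.deriv.eq_of_nhds]

theorem integral_Ioi_mul_radialLaplacian (n : ℕ) {G : ℝ → ℝ} (hG : ContDiff ℝ 2 G)
    (hGc : HasCompactSupport G) :
    ∫ r in Ioi 0, r * radialLaplacian n G r = (2 - n) * G 0 := by
  have hG' : ContDiff ℝ 1 (deriv G) := ((contDiff_succ_iff_deriv (n := 1)).1 hG).2.2
  let F (r : ℝ) : ℝ := (n - 2) * G (r ^ 2) + 2 * r ^ 2 * deriv G (r ^ 2)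
  have hFc : HasCompactSupport F :=
    (hasCompactSupport_comp_sq hGc).mul_left.add (hasCompactSupport_comp_sq hGc.deriv).mul_left
  have hF : ContDiff ℝ 1 F := by
    have := hG.of_le one_le_two
    fun_prop
  have hF' (r : ℝ) : deriv F r = r * radialLaplacian n G r := by
    have hsq : HasDerivAt (fun r : ℝ ↦ r ^ 2) (2 * r) r := by simpa using hasDerivAt_pow 2 r
    have h1 := (hG.differentiable two_ne_zero (r ^ 2)).hasDerivAt.comp r hsq
    have h2 := (hG'.differentiable one_ne_zero (r ^ 2)).hasDerivAt.comp r hsq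
    have := (h1.const_mul (n - 2 : ℝ)).add ((hsq.const_mul 2).mul h2)
    refine this.deriv.trans ?_
    simp only [radialLaplacian, Function.comp_apply]
    ring
  simp_rw [← hF', hFc.integral_Ioi_deriv_eq hF 0, F]
  ring_nf

end Radial

section PolarCoordinates

theorem integrable_volumeIoiPow_iff {F : Type*} [NormedAddCommGroup F] [NormedSpace ℝ F] (n : ℕ)
    (f : ℝ → F) : Integrable (fun r : Ioi (0 : ℝ) ↦ f r) (.volumeIoiPow n) ↔
      IntegrableOn (fun r ↦ r ^ n • f r) (Ioi 0) := by
  rw [integrableOn_iff_comap_subtypeVal measurableSet_Ioi, Measure.volumeIoiPow,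
    integrable_withDensity_iff_integrable_smul' (by fun_prop) (by simp)]
  refine integrable_congr (.of_forall fun r ↦ ?_)
  simp [ENNReal.toReal_ofReal (pow_nonneg r.2.out.le n)]

theorem integral_volumeIoiPow {F : Type*} [NormedAddCommGroup F] [NormedSpace ℝ F] (n : ℕ)
    (f : ℝ → F) :
    ∫ r : Ioi (0 : ℝ), f r ∂.volumeIoiPow n = ∫ r in Ioi (0 : ℝ), r ^ n • f r := by
  rw [← integral_subtype_comap measurableSet_Ioi fun r ↦ r ^ n • f r]
  simp only [Measure.volumeIoiPow, ENNReal.ofReal]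
  rw [integral_withDensity_eq_integral_smul (by fun_prop)]
  refine integral_congr_ae (.of_forall fun r ↦ ?_)
  simp [NNReal.smul_def, Real.coe_toNNReal _ (pow_nonneg r.2.out.le n)]

variable {E 𝕜 : Type*} [NormedAddCommGroup E] [NormedSpace ℝ E] [FiniteDimensional ℝ E]
  [Nontrivial E] [MeasurableSpace E] [BorelSpace E] {μ : Measure E} [μ.IsAddHaarMeasure] [RCLike 𝕜]

theorem integral_mul_fun_norm (A : E → 𝕜) (B : ℝ → 𝕜) :
    ∫ x, A (‖x‖⁻¹ • x) * B ‖x‖ ∂μ = (∫ n : sphere (0 : E) 1, A n ∂μ.toSphere) *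
      ∫ r in Ioi (0 : ℝ), r ^ (finrank ℝ E - 1) • B r := by
  calc ∫ x, A (‖x‖⁻¹ • x) * B ‖x‖ ∂μ
      = ∫ x : ({0}ᶜ : Set E), A (‖x.1‖⁻¹ • x.1) * B ‖x.1‖ ∂μ.comap (↑) := by
        rw [integral_subtype_comap (measurableSet_singleton _).compl
          fun x ↦ A (‖x‖⁻¹ • x) * B ‖x‖, restrict_compl_singleton]
    _ = ∫ z, A z.1 * B z.2 ∂μ.toSphere.prod (.volumeIoiPow (finrank ℝ E - 1)) := by
        simpa using μ.measurePreserving_homeomorphUnitSphereProd.integral_comp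
          (Homeomorph.measurableEmbedding _)
          fun z : sphere (0 : E) 1 × Ioi (0 : ℝ) ↦ A z.1 * B z.2
    _ = _ := by
        rw [← integral_volumeIoiPow]
        exact integral_prod_mul (fun n : sphere (0 : E) 1 ↦ A n) fun r : Ioi (0 : ℝ) ↦ B r

theorem integrable_mul_fun_norm {A : E → 𝕜} {B : ℝ → 𝕜}
    (hA : Integrable (fun n : sphere (0 : E) 1 ↦ A n) μ.toSphere)
    (hB : IntegrableOn (fun r ↦ r ^ (finrank ℝ E - 1) • B r) (Ioi 0)) :
    Integrable (fun x ↦ A (‖x‖⁻¹ • x) * B ‖x‖) μ := by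
  rw [← integrable_volumeIoiPow_iff] at hB
  rw [← restrict_compl_singleton (μ := μ) 0, ← IntegrableOn,
    integrableOn_iff_comap_subtypeVal (measurableSet_singleton _).compl]
  simpa [Function.comp_def] using (μ.measurePreserving_homeomorphUnitSphereProd.integrable_comp_emb
    (Homeomorph.measurableEmbedding _)).2 (hA.mul_prod hB)

end PolarCoordinates

section Multipole

variable {E : Type*} [NormedAddCommGroup E] [NormedSpace ℝ E]

/-- The multipole `A (x / |x|) / |x| ^ j` with angular profile `A`; the value at `x = 0` is junk. -/
noncomputable def multipole (A : E → ℂ) (j : ℕ) (x : E) : ℂ :=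
  A (‖x‖⁻¹ • x) / (‖x‖ : ℂ) ^ j

theorem multipole_smul (A : E → ℂ) (j : ℕ) {R : ℝ} (hR : 0 < R) (x : E) :
    multipole A j (R • x) = (R : ℂ)⁻¹ ^ j * multipole A j x := by
  have hdir : ‖R • x‖⁻¹ • R • x = ‖x‖⁻¹ • x := by
    rw [norm_smul, Real.norm_of_nonneg hR.le, smul_smul, mul_inv, mul_right_comm,
      inv_mul_cancel₀ hR.ne', one_mul]
  rw [multipole, multipole, hdir, norm_smul, Real.norm_of_nonneg hR.le]
  push_cast
  rw [mul_pow, inv_pow, div_eq_mul_inv, div_eq_mul_inv, mul_inv]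
  ring

theorem integrableOn_Ioi_pow_mul_div_pow {w : ℝ → ℝ} (hw : Continuous w) (hwc : HasCompactSupport w)
    (hw0 : ∀ r ∈ Ico 0 1, w r = 0) (n j d : ℕ) :
    IntegrableOn (fun r ↦ r ^ d * (w r * r ^ n / r ^ j)) (Ioi 0) := by
  have hbound : Integrable fun r ↦ r ^ d * r ^ n * w r :=
    integrable_mul_of_hasCompactSupport (by fun_prop) hw hwc
  have := hw.measurable
  refine hbound.norm.integrableOn.mono' (Measurable.aestronglyMeasurable (by fun_prop)) ?_
  filter_upwards [self_mem_ae_restrict measurableSet_Ioi] with r (hr : 0 < r)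
  rcases lt_or_ge r 1 with h | h
  · simp [hw0 r ⟨hr.le, h⟩]
  rw [norm_mul, norm_div, norm_mul, norm_mul, norm_mul, mul_assoc, mul_comm ‖r ^ n‖]
  gcongr
  refine div_le_self (by positivity) ?_
  simpa using one_le_pow₀ (h.trans (le_abs_self r))

theorem multipole_mul_radial_smul {w : ℝ → ℝ} (hw : w 0 = 0) {q : E → ℂ} {n : ℕ}
    (hhom : ∀ r : ℝ, 0 < r → ∀ x, q (r • x) = r ^ n • q x) (A : E → ℂ) (j : ℕ) (x : E) :
    multipole A j x * (w ‖x‖ • q x) =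
      (A (‖x‖⁻¹ • x) * q (‖x‖⁻¹ • x)) * (w ‖x‖ * ‖x‖ ^ n / ‖x‖ ^ j : ℝ) := by
  rcases eq_or_ne x 0 with rfl | hx
  · simp [hw]
  have hq : q x = ‖x‖ ^ n • q (‖x‖⁻¹ • x) := by
    rw [← hhom _ (norm_pos_iff.2 hx), smul_inv_smul₀ (norm_ne_zero_iff.2 hx)]
  rw [hq, multipole]
  simp only [Complex.real_smul]
  push_cast
  ring

variable [FiniteDimensional ℝ E] [Nontrivial E] [MeasurableSpace E] [BorelSpace E]
  {μ : Measure E} [μ.IsAddHaarMeasure] {w : ℝ → ℝ} {q : E → ℂ} {n : ℕ} {A : E → ℂ}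

theorem integrable_multipole_mul_radial_smul (hw : Continuous w) (hwc : HasCompactSupport w)
    (hw0 : ∀ r ∈ Ico 0 1, w r = 0) (hhom : ∀ r : ℝ, 0 < r → ∀ x, q (r • x) = r ^ n • q x)
    (hA : Integrable (fun y : sphere (0 : E) 1 ↦ A y * q y) μ.toSphere) (j : ℕ) :
    Integrable (fun x ↦ multipole A j x * (w ‖x‖ • q x)) μ := by
  simp only [multipole_mul_radial_smul (hw0 0 (by simp)) hhom]
  refine integrable_mul_fun_norm (A := fun y ↦ A y * q y)
    (B := fun r ↦ (w r * r ^ n / r ^ j : ℝ)) hA ?_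
  simpa [IntegrableOn] using (integrableOn_Ioi_pow_mul_div_pow hw hwc hw0 n j _).ofReal (𝕜 := ℂ)

theorem integral_multipole_mul_radial_smul (hw0 : w 0 = 0)
    (hhom : ∀ r : ℝ, 0 < r → ∀ x, q (r • x) = r ^ n • q x) (j : ℕ) :
    ∫ x, multipole A j x * (w ‖x‖ • q x) ∂μ = (∫ y : sphere (0 : E) 1, A y * q y ∂μ.toSphere) *
      (∫ r in Ioi 0, r ^ (finrank ℝ E - 1) * (w r * r ^ n / r ^ j) : ℝ) := by
  simp only [multipole_mul_radial_smul hw0 hhom]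
  rw [integral_mul_fun_norm (fun y ↦ A y * q y) fun r ↦ (w r * r ^ n / r ^ j : ℝ),
    ← integral_complex_ofReal]
  simp

theorem integral_multipole_mul_radialLaplacian_smul {G : ℝ → ℝ} (hG : ContDiff ℝ 2 G)
    (hGc : HasCompactSupport G) (hG0 : deriv G 0 = 0) {k : ℕ} (hk : finrank ℝ E = k + 2)
    (hhom : ∀ r : ℝ, 0 < r → ∀ x, q (r • x) = r ^ n • q x) :
    ∫ x, multipole A (n + k) x * (radialLaplacian (finrank ℝ E + 2 * n) G ‖x‖ • q x) ∂μ =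
      -((2 * n + k) * G 0 * ∫ y : sphere (0 : E) 1, A y * q y ∂μ.toSphere) := by
  have hradial : ∫ r in Ioi 0, r ^ (finrank ℝ E - 1) *
      (radialLaplacian (finrank ℝ E + 2 * n) G r * r ^ n / r ^ (n + k)) =
        -((2 * n + k) * G 0) := by
    calc _ = ∫ r in Ioi 0, r * radialLaplacian (finrank ℝ E + 2 * n) G r := by
          refine setIntegral_congr_fun measurableSet_Ioi fun r (hr : 0 < r) ↦ ?_
          simp only [hk, Nat.add_succ_sub_one]
          field_simp
          ring
      _ = _ := by
          rw [integral_Ioi_mul_radialLaplacian _ hG hGc, hk]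
          push_cast
          ring
  rw [integral_multipole_mul_radial_smul (by simp [radialLaplacian, hG0]) hhom, hradial]
  push_cast
  ring

end Multipole

section Limits

variable {E : Type*} [NormedAddCommGroup E] [NormedSpace ℝ E] [MeasurableSpace E] {μ : Measure E}

theorem tendsto_integral_comp_inv_smul_smul [OpensMeasurableSpace E] {F : Type*}
    [NormedAddCommGroup F] [NormedSpace ℝ F] {χ : E → ℝ} (hχ : Continuous χ) {c : ℝ}
    (hχc : ∀ x, ‖χ x‖ ≤ c) {f : E → F} (hf : Integrable f μ) :
    Tendsto (fun R : ℝ ↦ ∫ x, χ (R⁻¹ • x) • f x ∂μ) atTop (𝓝 (χ 0 • ∫ x, f x ∂μ)) := by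
  rw [← integral_smul]
  refine tendsto_integral_filter_of_dominated_convergence (fun x ↦ c * ‖f x‖)
    (.of_forall fun R ↦ ?_) (.of_forall fun R ↦ .of_forall fun x ↦ ?_) (hf.norm.const_mul c)
    (.of_forall fun x ↦ ?_)
  · have : Continuous fun x ↦ χ (R⁻¹ • x) := by fun_prop
    exact this.aestronglyMeasurable.smul hf.1
  · rw [norm_smul]
    gcongr
    exact hχc _
  · have : Tendsto (fun R : ℝ ↦ R⁻¹ • x) atTop (𝓝 0) := by
      simpa using (tendsto_inv_atTop_zero (𝕜 := ℝ)).smul_const x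
    exact ((hχ.tendsto 0).comp this).smul_const _

theorem tendsto_pow_mul_integral_comp_smul_mul [ProperSpace E] {N : ℕ} {err g : E → ℂ}
    (herr : err =o[cocompact E] fun x ↦ (‖x‖ ^ N)⁻¹) (hg : Integrable g μ)
    (hg0 : ∀ x, ‖x‖ < 1 → g x = 0) :
    Tendsto (fun R : ℝ ↦ (R : ℂ) ^ N * ∫ x, err (R • x) * g x ∂μ) atTop (𝓝 0) := by
  set I := ∫ x, ‖g x‖ ∂μ
  have : 0 ≤ I := integral_nonneg fun _ ↦ norm_nonneg _
  refine Metric.tendsto_nhds.2 fun ε hε ↦ ?_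
  set c := ε / (I + 1)
  have hc : 0 < c := by positivity
  obtain ⟨R₀, hR₀⟩ : ∃ R₀, ∀ x, R₀ ≤ ‖x‖ → ‖err x‖ ≤ c * (‖x‖ ^ N)⁻¹ := by
    have := herr.bound hc
    rw [← Metric.cobounded_eq_cocompact, ← comap_norm_atTop, eventually_comap,
      eventually_atTop] at this
    obtain ⟨R₀, h⟩ := this
    exact ⟨R₀, fun x hx ↦ by simpa using h _ hx x rfl⟩
  filter_upwards [eventually_ge_atTop R₀, eventually_gt_atTop 0] with R hR hRpos
  have hbound (x : E) : ‖(R : ℂ) ^ N * (err (R • x) * g x)‖ ≤ c * ‖g x‖ := by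
    rcases lt_or_ge ‖x‖ 1 with hx | hx
    · simp [hg0 x hx]
    have hRx : R ≤ ‖R • x‖ := by
      rw [norm_smul, Real.norm_of_nonneg hRpos.le]
      exact le_mul_of_one_le_right hRpos.le hx
    have herrR : ‖err (R • x)‖ ≤ c * (R ^ N)⁻¹ :=
      (hR₀ _ (hR.trans hRx)).trans (by gcongr)
    calc ‖(R : ℂ) ^ N * (err (R • x) * g x)‖
        = R ^ N * (‖err (R • x)‖ * ‖g x‖) := by simp [abs_of_pos hRpos]
      _ ≤ R ^ N * (c * (R ^ N)⁻¹ * ‖g x‖) := by gcongr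
      _ = c * ‖g x‖ := by field_simp
  rw [dist_zero_right, ← integral_const_mul]
  calc _ ≤ ∫ x, c * ‖g x‖ ∂μ :=
        norm_integral_le_of_norm_le (hg.norm.const_mul c) (.of_forall hbound)
    _ = c * I := integral_const_mul ..
    _ < c * (I + 1) := by gcongr; exact lt_add_one I
    _ = ε := div_mul_cancel₀ _ (by positivity)

theorem polynomial_eq_C_of_tendsto_eval {α 𝕜 : Type*} [NormedField 𝕜] {l : Filter α} [l.NeBot]
    {Q : Polynomial 𝕜} {z : α → 𝕜} {L : 𝕜} (hz : Tendsto (fun t ↦ ‖z t‖) l atTop)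
    (hQ : Tendsto (fun t ↦ Q.eval (z t)) l (𝓝 L)) : Q = Polynomial.C L := by
  have hdeg : Q.degree ≤ 0 := not_lt.1 fun hpos ↦
    not_tendsto_atTop_of_tendsto_nhds hQ.norm (Q.tendsto_norm_atTop hpos hz)
  rw [Polynomial.eq_C_of_degree_le_zero hdeg] at hQ ⊢
  simp only [Polynomial.eval_C] at hQ
  rw [tendsto_nhds_unique tendsto_const_nhds hQ]

theorem eq_of_tendsto_sum_pow_mul {b : ℕ → ℂ} {n : ℕ} {L : ℂ}
    (h : Tendsto (fun R : ℝ ↦ ∑ m ∈ Finset.range (n + 1), (R : ℂ) ^ (n - m) * b m) atTop (𝓝 L)) :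
    b n = L := by
  let Q : Polynomial ℂ := ∑ m ∈ Finset.range (n + 1), Polynomial.X ^ (n - m) * Polynomial.C (b m)
  have heval (z : ℂ) : Q.eval z = ∑ m ∈ Finset.range (n + 1), z ^ (n - m) * b m := by
    simp only [Q, Polynomial.eval_finsetSum, Polynomial.eval_mul, Polynomial.eval_pow,
      Polynomial.eval_X, Polynomial.eval_C]
  have hQ : Q = Polynomial.C L := polynomial_eq_C_of_tendsto_eval
    (z := fun R : ℝ ↦ (R : ℂ)) (by simpa using tendsto_abs_atTop_atTop) (by simpa only [heval])
  have hconst := heval 0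
  rw [hQ, Polynomial.eval_C, Finset.sum_range_succ, Finset.sum_eq_zero] at hconst
  · simpa using hconst.symm
  · intro m hm
    simp [zero_pow (Nat.sub_ne_zero_of_lt (Finset.mem_range.1 hm))]

end Limits

section Moments

variable {E : Type*} [NormedAddCommGroup E] [InnerProductSpace ℝ E] [FiniteDimensional ℝ E]
  [MeasurableSpace E] [BorelSpace E] {μ : Measure E} [μ.IsAddHaarMeasure] {φ ρ q : E → ℂ} {ℓ k : ℕ}
  {G : ℝ → ℝ}

theorem integral_radial_comp_inv_smul_smul_mul (hk : finrank ℝ E = k + 2) (hφ : ContDiff ℝ 2 φ)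
    (hpoisson : ∀ x, Δ φ x = -ρ x) (hq : ContDiff ℝ 2 q) (hharm : ∀ x, Δ q x = 0)
    (hhom : ∀ r : ℝ, 0 < r → ∀ x, q (r • x) = r ^ ℓ • q x) (hG : ContDiff ℝ 2 G)
    (hGc : HasCompactSupport G) {R : ℝ} (hR : 0 < R) :
    ∫ x, G (‖R⁻¹ • x‖ ^ 2) • (ρ x * q x) ∂μ = -((R : ℂ) ^ (ℓ + k) *
      ∫ y, φ (R • y) * (radialLaplacian (finrank ℝ E + 2 * ℓ) G ‖y‖ • q y) ∂μ) := by
  have hψ : ContDiff ℝ 2 fun y ↦ G (‖y‖ ^ 2) • q y := (contDiff_comp_norm_sq hG).fun_smul hq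
  have hψc : HasCompactSupport fun y ↦ G (‖y‖ ^ 2) • q y :=
    (hasCompactSupport_comp_norm_sq hGc).smul_right
  have hφR : ContDiff ℝ 2 fun y ↦ φ (R • y) := by fun_prop
  have hgreen := integral_mul_laplacian_comm (μ := μ) hφR hψ hψc
  simp only [laplacian_comp_norm_sq_smul hG hq hharm hhom, laplacian_comp_const_smul hφ,
    hpoisson] at hgreen
  rw [hgreen]
  have hscale : ∫ x, G (‖R⁻¹ • x‖ ^ 2) • (ρ x * q x) ∂μ =
      R ^ finrank ℝ E • ∫ y, G (‖y‖ ^ 2) • (ρ (R • y) * q (R • y)) ∂μ := by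
    have := Measure.integral_comp_inv_smul μ
      (fun y ↦ G (‖y‖ ^ 2) • (ρ (R • y) * q (R • y))) R
    simpa [smul_inv_smul₀ hR.ne', abs_of_pos hR] using this
  rw [hscale, hk, ← integral_smul, ← integral_const_mul, ← integral_neg]
  refine integral_congr_ae (.of_forall fun y ↦ ?_)
  simp only [hhom R hR, Complex.real_smul]
  push_cast
  ring

theorem tendsto_sum_pow_mul_integral_multipole [Nontrivial E] (hφ : Continuous φ)
    (hq : Continuous q) (hhom : ∀ r : ℝ, 0 < r → ∀ x, q (r • x) = r ^ ℓ • q x)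
    {w : ℝ → ℝ} (hw : Continuous w) (hwc : HasCompactSupport w)
    (hw0 : ∀ r ∈ Ico 0 1, w r = 0) {A : ℕ → E → ℂ}
    (hA : ∀ m ≤ ℓ, Integrable (fun n : sphere (0 : E) 1 ↦ A m n * q n) μ.toSphere)
    (hexp : (fun x ↦ φ x - ∑ m ∈ Finset.range (ℓ + 1), multipole (A m) (m + k) x)
      =o[cocompact E] fun x ↦ (‖x‖ ^ (ℓ + k))⁻¹) {L : ℂ}
    (hL : Tendsto (fun R : ℝ ↦ (R : ℂ) ^ (ℓ + k) * ∫ x, φ (R • x) * (w ‖x‖ • q x) ∂μ)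
      atTop (𝓝 L)) :
    Tendsto (fun R : ℝ ↦ ∑ m ∈ Finset.range (ℓ + 1), (R : ℂ) ^ (ℓ - m) *
      ∫ x, multipole (A m) (m + k) x * (w ‖x‖ • q x) ∂μ) atTop (𝓝 L) := by
  have hg : Continuous fun x ↦ w ‖x‖ • q x := by fun_prop
  have hgc : HasCompactSupport fun x ↦ w ‖x‖ • q x :=
    (hasCompactSupport_comp_of_tendsto hwc tendsto_norm_cocompact_atTop).smul_right
  have hint (m : ℕ) (hm : m ∈ Finset.range (ℓ + 1)) :
      Integrable (fun x ↦ multipole (A m) (m + k) x * (w ‖x‖ • q x)) μ :=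
    integrable_multipole_mul_radial_smul hw hwc hw0 hhom (hA m (Finset.mem_range_succ_iff.1 hm)) _
  have herr := tendsto_pow_mul_integral_comp_smul_mul hexp
    (hg.integrable_of_hasCompactSupport (μ := μ) hgc) fun x hx ↦ by simp [hw0 _ ⟨norm_nonneg x, hx⟩]
  have hdiff := hL.sub herr
  rw [sub_zero] at hdiff
  refine hdiff.congr' ?_
  filter_upwards [eventually_gt_atTop 0] with R hR
  rw [← mul_sub]
  have hφg : Integrable (fun x ↦ φ (R • x) * (w ‖x‖ • q x)) μ :=
    integrable_mul_of_hasCompactSupport (by fun_prop) hg hgc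
  simp only [sub_mul, Finset.sum_mul, multipole_smul _ _ hR, mul_assoc]
  rw [integral_sub hφg (integrable_finsetSum _ fun m hm ↦ (hint m hm).const_mul _),
    integral_finsetSum _ fun m hm ↦ (hint m hm).const_mul _, sub_sub_cancel, Finset.mul_sum]
  refine Finset.sum_congr rfl fun m hm ↦ ?_
  have hmℓ : m + k ≤ ℓ + k := by simpa using Finset.mem_range_succ_iff.1 hm
  rw [integral_const_mul, ← mul_assoc, inv_pow, ← pow_sub₀ _ (by exact_mod_cast hR.ne') hmℓ,
    Nat.add_sub_add_right]

theorem exists_contDiff_hasCompactSupport_eq_one : ∃ G : ℝ → ℝ, ContDiff ℝ 2 G ∧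
    HasCompactSupport G ∧ (∀ s ∈ Ioo (-1) 1, G =ᶠ[𝓝 s] 1) ∧ ∀ s, ‖G s‖ ≤ 1 := by
  let G : ContDiffBump (0 : ℝ) := ⟨1, 2, one_pos, one_lt_two⟩
  refine ⟨G, G.contDiff, G.hasCompactSupport, fun s hs ↦ ?_, fun s ↦ ?_⟩
  · exact eventually_of_mem (isOpen_Ioo.mem_nhds hs) fun t ht ↦
      G.one_of_mem_closedBall (by simpa using (abs_lt.2 ht).le)
  · rw [Real.norm_of_nonneg G.nonneg]
    exact G.le_one

theorem moments_eq_multipole_coefficients_general (hk : finrank ℝ E = k + 2)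
    (hφ : ContDiff ℝ 2 φ) (hpoisson : ∀ x, Δ φ x = -ρ x) (hq : ContDiff ℝ 2 q)
    (hharm : ∀ x, Δ q x = 0) (hhom : ∀ r : ℝ, 0 < r → ∀ x, q (r • x) = r ^ ℓ • q x)
    (hρq : Integrable (fun x ↦ ρ x * q x) μ) {A : ℕ → E → ℂ}
    (hA : ∀ m ≤ ℓ, Integrable (fun n : sphere (0 : E) 1 ↦ A m n * q n) μ.toSphere)
    (hexp : (fun x ↦ φ x - ∑ m ∈ Finset.range (ℓ + 1), multipole (A m) (m + k) x)
      =o[cocompact E] fun x ↦ (‖x‖ ^ (ℓ + k))⁻¹) :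
    ∫ x, ρ x * q x ∂μ = (2 * ℓ + k) * ∫ n : sphere (0 : E) 1, A ℓ n * q n ∂μ.toSphere := by
  have : Nontrivial E := nontrivial_of_finrank_pos (R := ℝ) (by omega)
  obtain ⟨G, hG, hGc, hG1, hGle⟩ := exists_contDiff_hasCompactSupport_eq_one
  have hG0 : G =ᶠ[𝓝 0] 1 := hG1 0 (by simp)
  set w := radialLaplacian (finrank ℝ E + 2 * ℓ) G
  have hw0 (r : ℝ) (hr : r ∈ Ico 0 1) : w r = 0 :=
    radialLaplacian_eq_zero _ (hG1 _ ⟨by linarith [sq_nonneg r], pow_lt_one₀ hr.1 hr.2 two_ne_zero⟩)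
  have hmoment : Tendsto (fun R : ℝ ↦ ∫ x, G (‖R⁻¹ • x‖ ^ 2) • (ρ x * q x) ∂μ) atTop
      (𝓝 (∫ x, ρ x * q x ∂μ)) := by
    simpa [hG0.self_of_nhds] using tendsto_integral_comp_inv_smul_smul
      (χ := fun x : E ↦ G (‖x‖ ^ 2)) (contDiff_comp_norm_sq hG).continuous (fun _ ↦ hGle _) hρq
  have hgreen : Tendsto (fun R : ℝ ↦ (R : ℂ) ^ (ℓ + k) * ∫ x, φ (R • x) * (w ‖x‖ • q x) ∂μ) atTop
      (𝓝 (-∫ x, ρ x * q x ∂μ)) := by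
    refine hmoment.neg.congr' ?_
    filter_upwards [eventually_gt_atTop 0] with R hR
    rw [integral_radial_comp_inv_smul_smul_mul hk hφ hpoisson hq hharm hhom hG hGc hR, neg_neg]
  have hcoeff := eq_of_tendsto_sum_pow_mul <| tendsto_sum_pow_mul_integral_multipole hφ.continuous
    hq.continuous hhom (continuous_radialLaplacian _ hG) (hasCompactSupport_radialLaplacian _ hGc)
    hw0 hA hexp hgreen
  rw [integral_multipole_mul_radialLaplacian_smul hG hGc (by simp [hG0.deriv_eq]) hk hhom,
    hG0.self_of_nhds] at hcoeff
  simpa using (neg_injective hcoeff).symm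

end Moments

section Decay

variable {E : Type*} [NormedAddCommGroup E]

theorem isLittleO_norm_rpow_inv_norm_pow [ProperSpace E] {s : ℝ} {n : ℕ} (hs : s < -n) :
    (fun x : E ↦ ‖x‖ ^ s) =o[cocompact E] fun x ↦ (‖x‖ ^ n)⁻¹ := by
  suffices (fun r : ℝ ↦ r ^ s) =o[atTop] fun r ↦ (r ^ n)⁻¹ from
    this.comp_tendsto tendsto_norm_cocompact_atTop
  have hpos : 0 < -(s + n) := by linarith
  refine (isLittleO_iff_tendsto' ?_).2 ((tendsto_rpow_neg_atTop hpos).congr' ?_)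
  all_goals filter_upwards [eventually_gt_atTop 0] with r hr
  · intro h
    exact absurd h (by positivity)
  · rw [neg_neg, Real.rpow_add hr, Real.rpow_natCast, div_inv_eq_mul]

variable [NormedSpace ℝ E] [FiniteDimensional ℝ E] [Nontrivial E] [MeasurableSpace E]
  [BorelSpace E] {μ : Measure E} [μ.IsAddHaarMeasure]

theorem integrable_norm_pow_mul_exp_neg_mul_norm {a : ℝ} (ha : 0 < a) (n : ℕ) :
    Integrable (fun x : E ↦ ‖x‖ ^ n * Real.exp (-a * ‖x‖)) μ := by
  rw [integrable_fun_norm_addHaar μ (f := fun r ↦ r ^ n * Real.exp (-a * r))]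
  have hs : (-1 : ℝ) < (finrank ℝ E - 1 + n : ℕ) := neg_one_lt_zero.trans_le (Nat.cast_nonneg _)
  simpa only [Real.rpow_natCast, Real.rpow_one, pow_add, mul_assoc, smul_eq_mul] using
    integrableOn_rpow_mul_exp_neg_mul_rpow hs one_pos ha

theorem integrable_mul_clm_pow_of_norm_le_exp {A : Type*} [NormedRing A]
    [NormOneClass A] [NormedSpace ℝ A] {f : E → A} (hf : Continuous f) {C a : ℝ} (ha : 0 < a)
    (hbound : ∀ x, ‖f x‖ ≤ C * Real.exp (-a * ‖x‖)) (L : E →L[ℝ] A) (n : ℕ) :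
    Integrable (fun x ↦ f x * L x ^ n) μ := by
  refine ((integrable_norm_pow_mul_exp_neg_mul_norm ha n).const_mul (C * ‖L‖ ^ n)).mono'
    (by fun_prop) (.of_forall fun x ↦ ?_)
  calc ‖f x * L x ^ n‖ ≤ ‖f x‖ * ‖L x‖ ^ n :=
        (norm_mul_le _ _).trans (by gcongr; exact norm_pow_le _ _)
    _ ≤ C * Real.exp (-a * ‖x‖) * (‖L‖ * ‖x‖) ^ n := by
        gcongr
        · exact (norm_nonneg _).trans (hbound x)
        · exact hbound x
        · exact L.le_opNorm x
    _ = C * ‖L‖ ^ n * (‖x‖ ^ n * Real.exp (-a * ‖x‖)) := by ring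

end Decay

section EuclideanThreeSpace

/-- The function `x ↦ x(ζ)` as a continuous linear map. -/
noncomputable def xzCLM (ζ : ℂ) : EuclideanSpace ℝ (Fin 3) →L[ℝ] ℂ :=
  LinearMap.toContinuousLinearMap
    { toFun := xzE ζ
      map_add' x y := by simp only [xzE, PiLp.add_apply, Complex.ofReal_add]; ring
      map_smul' c x := by
        simp only [xzE, PiLp.smul_apply, smul_eq_mul, Complex.ofReal_mul, RingHom.id_apply,
          Complex.real_smul]
        ring }

-- The coefficient vector of `x ↦ x(ζ)` is isotropic in `ℂ³`, which makes `x(ζ) ^ ℓ` harmonic.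
theorem sum_xzCLM_basisFun_sq (ζ : ℂ) :
    ∑ i, xzCLM ζ (EuclideanSpace.basisFun (Fin 3) ℝ i) ^ 2 = 0 := by
  have hcoeff (i : Fin 3) : xzCLM ζ (EuclideanSpace.basisFun (Fin 3) ℝ i) =
      ![(1 - ζ ^ 2) / 2, Complex.I * (1 + ζ ^ 2) / 2, ζ] i := by
    fin_cases i <;> simp [xzCLM, xzE] <;> ring
  rw [Fin.sum_univ_three, hcoeff, hcoeff, hcoeff]
  change ((1 - ζ ^ 2) / 2) ^ 2 + (Complex.I * (1 + ζ ^ 2) / 2) ^ 2 + ζ ^ 2 = 0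
  linear_combination (1 + ζ ^ 2) ^ 2 / 4 * Complex.I_sq

theorem laplacian_ofReal_comp_eq_sum_pdER {f : EuclideanSpace ℝ (Fin 3) → ℝ}
    {x : EuclideanSpace ℝ (Fin 3)} (hf : ContDiffAt ℝ 2 f x) :
    Δ (fun y ↦ (f y : ℂ)) x = (∑ j, pdER j (fun y ↦ pdER j f y) x : ℝ) := by
  have hofReal : Δ (fun y ↦ (f y : ℂ)) x = (Δ f x : ℝ) :=
    hf.laplacian_CLM_comp_left (l := Complex.ofRealCLM)
  simp only [hofReal, pdER, EuclideanSpace.basisFun_apply,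
    laplacian_eq_sum_fderiv_fderiv (EuclideanSpace.basisFun (Fin 3) ℝ) hf]

theorem integrable_evalP_mul_toSphere (P : MvPolynomial (Fin 3) ℂ)
    {q : EuclideanSpace ℝ (Fin 3) → ℂ} (hq : Continuous q) :
    Integrable (fun n : sphere (0 : EuclideanSpace ℝ (Fin 3)) 1 ↦ evalP P n * q n)
      volume.toSphere := by
  have hP : Continuous (evalP P) := (MvPolynomial.continuous_eval P).comp (by fun_prop)
  exact Continuous.integrable_of_hasCompactSupport (by fun_prop) (.of_compactSpace _)

end EuclideanThreeSpace

end MultipoleMoments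

/-- If `ρ` is smooth and exponentially decaying, `φ` is smooth with `Δφ = −ρ`, and `φ`
admits a multipole expansion `φ(x) ~ Σ_m p_m(x/|x|)/|x|^{m+1}` (with harmonic homogeneous
polynomials `p_m`, valid to all orders together with its radial derivative), then the moments
of `ρ` satisfy `∫ ρ(x) x(ζ)^ℓ d³x = (2ℓ+1) ∫_{S²} p_ℓ(n) n(ζ)^ℓ dA(n)`. -/
theorem moments_eq_multipole_coefficients
    (ρ φ : EuclideanSpace ℝ (Fin 3) → ℝ)
    (hρ : ContDiff ℝ (⊤ : ℕ∞) ρ) (hφ : ContDiff ℝ (⊤ : ℕ∞) φ)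
    (C a : ℝ) (hC : 0 < C) (ha : 0 < a)
    (hbound : ∀ x, |ρ x| ≤ C * Real.exp (-a * ‖x‖))
    (hpoisson : ∀ x, ∑ j : Fin 3, pdER j (fun y => pdER j φ y) x = -ρ x)
    (p : ℕ → MvPolynomial (Fin 3) ℂ)
    (hhom : ∀ m, (p m).IsHomogeneous m)
    (hharm : ∀ m x, ∑ j : Fin 3, pdE j (fun y => pdE j (evalP (p m)) y) x = 0)
    (hφexp : ∀ K : ℕ,
      (fun x : EuclideanSpace ℝ (Fin 3) =>
          (φ x : ℂ)
            - ∑ m ∈ Finset.range (K + 1), evalP (p m) (‖x‖⁻¹ • x) / (‖x‖ : ℂ) ^ (m + 1))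
        =O[cocompact (EuclideanSpace ℝ (Fin 3))] fun x => ‖x‖ ^ (-(K : ℝ) - 2))
    (hφ'exp : ∀ K : ℕ,
      (fun x : EuclideanSpace ℝ (Fin 3) =>
          ((fderiv ℝ φ x (‖x‖⁻¹ • x) : ℝ) : ℂ)
            - ∑ m ∈ Finset.range (K + 1),
                (-(m + 1) : ℂ) * evalP (p m) (‖x‖⁻¹ • x) / (‖x‖ : ℂ) ^ (m + 2))
        =O[cocompact (EuclideanSpace ℝ (Fin 3))] fun x => ‖x‖ ^ (-(K : ℝ) - 2)) :
    ∀ (ℓ : ℕ) (ζ : ℂ),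
      (∫ x : EuclideanSpace ℝ (Fin 3), (ρ x : ℂ) * xzE ζ x ^ ℓ) =
        (2 * ℓ + 1 : ℂ) *
          ∫ n : Metric.sphere (0 : EuclideanSpace ℝ (Fin 3)) 1,
            evalP (p ℓ) (n : EuclideanSpace ℝ (Fin 3)) *
              xzE ζ (n : EuclideanSpace ℝ (Fin 3)) ^ ℓ
            ∂((volume : Measure (EuclideanSpace ℝ (Fin 3))).toSphere) := by
  intro ℓ ζ
  have hφ2 : ContDiff ℝ 2 φ := contDiff_infty.1 hφ 2
  have hΔφ (x) : Laplacian.laplacian (fun y ↦ (φ y : ℂ)) x = -(ρ x : ℂ) := by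
    rw [laplacian_ofReal_comp_eq_sum_pdER hφ2.contDiffAt, hpoisson, Complex.ofReal_neg]
  have hρq := integrable_mul_clm_pow_of_norm_le_exp (μ := volume) (f := fun x ↦ (ρ x : ℂ))
    (by fun_prop) ha (by simpa using hbound) (xzCLM ζ) ℓ
  have hA (m : ℕ) (_ : m ≤ ℓ) := integrable_evalP_mul_toSphere (p m) ((xzCLM ζ).continuous.pow ℓ)
  have hexp := (hφexp ℓ).trans_isLittleO
    (isLittleO_norm_rpow_inv_norm_pow (n := ℓ + 1) (by push_cast; linarith))
  exact_mod_cast moments_eq_multipole_coefficients_general (k := 1) finrank_euclideanSpace_fin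
    (Complex.ofRealCLM.contDiff.comp hφ2) hΔφ ((xzCLM ζ).contDiff.pow ℓ)
    (laplacian_clm_pow _ (sum_xzCLM_basisFun_sq ζ) ℓ) (fun r _ x ↦ by simp [mul_pow]) hρq hA hexp
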